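/- Consider K-user secure summation with user selection over F_q with inputs of length L, where K ≥ 2. Then (1/K)·Σ_{k∈[K]} H(Z_k) ≥ (1 + 1/2 + ⋯ + 1/(K−1))·L·log₂ q. In particular, if every key Z_k takes values in F_q^{L_Z} (so H(Z_k) ≤ L_Z·log₂ q), then the key rate R_Z = L_Z/L satisfies R_Z ≥ 1 + 1/2 + ⋯ + 1/(K−1) (converse part of Theorem 2). -/

import Mathlib

/-!
A random variable on the finite space `Ω` enters its entropy only through the partition of `Ω`
into its fibres, so entropies are treated as values of one function `partEnt μ : Setoid Ω → ℝ`.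
Pairing variables is the infimum of partitions, "`Y` is a function of `X`" is `ker X ≤ ker Y`,
and all Shannon inequalities reduce to submodularity (`partEnt_submodular`).

Write `ℓ = L log₂ q`, fix a nonempty set `U` of `n` users, and let `X = X^U`, let `σ` be the sum of
the inputs and let `-k` stand for `U \ {k}`. Security and correctness give
`H(X_U | W_U) = H(X_U) - ℓ`. As `σ` is independent of `(W_{-k}, Z_{-k})`, security also gives
`I(X_{-k}; W_U) = 0`, hence `H(X_k | X_{-k}, W_U) = H(X_k | X_{-k}) - ℓ` for each `k ∈ U`.
Together with `∑ H(X_k | X_{-k}) ≤ H(X_U)` this bounds the dual total correlation of the messages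
given the inputs:
`H(X_U | W_U) - ∑ H(X_k | X_{-k}, W_U) ≥ (n - 1) ℓ`.
Dual total correlation cannot increase when each coordinate is processed separately, and given the
inputs `X_k` is a function of `Z_k`; since keys and inputs are independent,
`H(Z_U) - ∑_{k ∈ U} H(Z_k | Z_{-k}) ≥ (n - 1) ℓ` (`dual_total_correlation_ge`).
Finally, induction on `U` turns these bounds into
`∑_{k ∈ U} H(Z_k) ≥ H(Z_U) + n (1/2 + ⋯ + 1/n) ℓ` (`sum_singleton_ge`), and `H(Z_[K]) ≥ (K - 1) ℓ`.
-/

open scoped BigOperators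

open Classical in
/-- The probability that the finitely-valued random variable `X` takes the value `s`,
under the probability weights `μ` on the finite sample space `Ω`. -/
noncomputable def probOf {Ω S : Type*} [Fintype Ω] (μ : Ω → ℝ) (X : Ω → S) (s : S) : ℝ :=
  ∑ ω ∈ Finset.univ.filter (fun ω => X ω = s), μ ω

/-- Shannon entropy (in bits) of a finitely-valued random variable. -/
noncomputable def Hent {Ω S : Type*} [Fintype Ω] [Fintype S] (μ : Ω → ℝ) (X : Ω → S) : ℝ :=
  - ∑ s : S, probOf μ X s * Real.logb 2 (probOf μ X s)

/-- Conditional entropy H(X | Y) (in bits). -/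
noncomputable def Hcond {Ω S T : Type*} [Fintype Ω] [Fintype S] [Fintype T]
    (μ : Ω → ℝ) (X : Ω → S) (Y : Ω → T) : ℝ :=
  Hent μ (fun ω => (X ω, Y ω)) - Hent μ Y

/-- Mutual information I(X ; Y) (in bits). -/
noncomputable def MI {Ω S T : Type*} [Fintype Ω] [Fintype S] [Fintype T]
    (μ : Ω → ℝ) (X : Ω → S) (Y : Ω → T) : ℝ :=
  Hent μ X + Hent μ Y - Hent μ (fun ω => (X ω, Y ω))

/-- Conditional mutual information I(X ; Y | Z) (in bits). -/
noncomputable def CMI {Ω S T U : Type*} [Fintype Ω] [Fintype S] [Fintype T] [Fintype U]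
    (μ : Ω → ℝ) (X : Ω → S) (Y : Ω → T) (Z : Ω → U) : ℝ :=
  Hcond μ X Z - Hcond μ X (fun ω => (Y ω, Z ω))

/-! ### Consequences of submodularity -/

section Submodular

variable {α ι : Type*} [SemilatticeInf α]

/-- Conditional mutual information `I(a; b | c)` is nonnegative, with `⊓` as pairing. -/
def Submod (h : α → ℝ) : Prop :=
  ∀ a b c : α, h (a ⊓ b ⊓ c) + h c ≤ h (a ⊓ c) + h (b ⊓ c)

lemma Submod.anti {h : α → ℝ} (hs : Submod h) {a b : α} (hab : a ≤ b) : h b ≤ h a := by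
  have := hs a a b
  rw [inf_idem, inf_eq_left.2 hab] at this
  linarith

/-- Conditioning on the finer `d` instead of `c` decreases the conditional entropy of `a`. -/
lemma Submod.cond {h : α → ℝ} (hs : Submod h) (a : α) {c d : α} (hdc : d ≤ c) :
    h (a ⊓ d) - h d ≤ h (a ⊓ c) - h c := by
  have := hs a d c
  rw [inf_assoc, inf_eq_left.2 hdc] at this
  linarith

/-- `I(a'; b') ≤ I(a; b)` when `a'`, `b'` are functions of `a`, `b`, in the case `I(a; b) = 0`. -/
lemma Submod.indep_mono {h : α → ℝ} (hs : Submod h) {a b a' b' : α}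
    (ha : a ≤ a') (hb : b ≤ b') (hab : h a + h b ≤ h (a ⊓ b)) :
    h a' + h b' ≤ h (a' ⊓ b') := by
  have h1 := hs.cond a hb
  have h2 := hs.cond b' ha
  rw [inf_comm b' a, inf_comm b' a'] at h2
  linarith

variable [OrderTop α] [DecidableEq ι]

lemma Submod.subadd {h : α → ℝ} (hs : Submod h) (h0 : h ⊤ = 0) (a b : α) :
    h (a ⊓ b) ≤ h a + h b := by
  have := hs a b ⊤
  simp only [inf_top_eq, h0] at this
  linarith

lemma inf_erase_inf (z : ι → α) {U : Finset ι} {k : ι} (hk : k ∈ U) :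
    z k ⊓ (U.erase k).inf z = U.inf z := by
  conv_rhs => rw [← Finset.insert_erase hk, Finset.inf_insert]

/-- Han's inequality `∑_{k ∈ U} H(z_k | z_{U \ k}, c) ≤ H(z_U | c)`. -/
lemma Submod.han {h : α → ℝ} (hs : Submod h) (z : ι → α) (c : α) (U : Finset ι) :
    ∑ k ∈ U, (h (U.inf z ⊓ c) - h ((U.erase k).inf z ⊓ c)) ≤ h (U.inf z ⊓ c) - h c := by
  induction U using Finset.induction_on with
  | empty => simp
  | insert j U hj ih =>
    rw [Finset.sum_insert hj, Finset.erase_insert hj]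
    have : ∑ k ∈ U, (h ((insert j U).inf z ⊓ c) - h (((insert j U).erase k).inf z ⊓ c))
        ≤ ∑ k ∈ U, (h (U.inf z ⊓ c) - h ((U.erase k).inf z ⊓ c)) := by
      refine Finset.sum_le_sum fun k hk => ?_
      have hjk : j ≠ k := fun e => hj (e ▸ hk)
      rw [Finset.erase_insert_of_ne hjk, Finset.inf_insert, Finset.inf_insert]
      have e1 : z j ⊓ U.inf z ⊓ c = z k ⊓ (z j ⊓ (U.erase k).inf z ⊓ c) := by
        rw [← inf_erase_inf z hk]; ac_rfl
      have e2 : U.inf z ⊓ c = z k ⊓ ((U.erase k).inf z ⊓ c) := by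
        rw [← inf_erase_inf z hk]; ac_rfl
      rw [e1, e2]
      exact hs.cond _ (by rw [inf_assoc]; exact inf_le_right)
    linarith

/-- The lower bound `H(Z_U) - ∑_{k ∈ U} H(Z_k | Z_{U \ k}) ≥ (|U| - 1) ℓ` on the dual total
correlation of the keys, for one set `U` of users with messages `x` and sum of inputs `σ`. -/
lemma dual_total_correlation_ge {h : α → ℝ} (hs : Submod h) (h0 : h ⊤ = 0) (w z x : ι → α) (σ : α)
    (U : Finset ι) (hU : U.Nonempty) (l : ℝ)
    (hx : ∀ k ∈ U, w k ⊓ z k ≤ x k)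
    (hWσ : U.inf w ≤ σ)
    (hσw : ∀ k ∈ U, σ ⊓ (U.erase k).inf w ≤ w k)
    (hσ : h σ ≤ l)
    (hW : ∀ S ⊆ U, h (S.inf w) = (S.card : ℝ) * l)
    (hind : ∀ S ⊆ U, h (U.inf w ⊓ S.inf z) = h (U.inf w) + h (S.inf z))
    (hcorr : h (σ ⊓ U.inf x) = h (U.inf x))
    (hsec : h (U.inf w ⊓ σ) - h σ - (h (U.inf w ⊓ (U.inf x ⊓ σ)) - h (U.inf x ⊓ σ)) = 0) :
    ∑ k ∈ U, (h (U.inf z) - h ((U.erase k).inf z)) + ((U.card : ℝ) - 1) * l ≤ h (U.inf z) := by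
  have hWσ' : ∀ k ∈ U, σ ⊓ (U.erase k).inf w = U.inf w := fun k hk =>
    le_antisymm (by rw [← inf_erase_inf w hk]; exact le_inf (hσw k hk) inf_le_right)
      (le_inf hWσ (Finset.inf_mono (Finset.erase_subset k U)))
  have hWer : ∀ k ∈ U, h (U.inf w) = l + h ((U.erase k).inf w) := fun k hk => by
    rw [hW U subset_rfl, hW _ (Finset.erase_subset k U), ← Finset.card_erase_add_one hk]
    push_cast; ring
  have hσl : h σ = l := by
    obtain ⟨k, hk⟩ := hU
    have := hs.subadd h0 σ ((U.erase k).inf w)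
    rw [hWσ' k hk, hWer k hk] at this
    linarith
  have hxS : ∀ S ⊆ U, S.inf w ⊓ S.inf z ≤ S.inf x := fun S hS =>
    Finset.le_inf fun k hk =>
      (inf_le_inf (Finset.inf_le hk) (Finset.inf_le hk)).trans (hx k (hS hk))
  have hXW : h (U.inf x ⊓ U.inf w) = h (U.inf x) + h (U.inf w) - l := by
    have e : U.inf w ⊓ (U.inf x ⊓ σ) = U.inf x ⊓ U.inf w := by
      rw [inf_left_comm, inf_eq_left.2 hWσ]
    rw [e, inf_eq_left.2 hWσ, inf_comm (U.inf x) σ, hcorr] at hsec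
    linarith
  -- `I(X_{-k}; W_U) = 0`
  have hXerW : ∀ k ∈ U, h (U.inf w) + h ((U.erase k).inf x)
      ≤ h ((U.erase k).inf x ⊓ U.inf w) := fun k hk => by
    have hsub := Finset.erase_subset k U
    have h1 : h σ + h ((U.erase k).inf w ⊓ (U.erase k).inf z)
        ≤ h (σ ⊓ ((U.erase k).inf w ⊓ (U.erase k).inf z)) := by
      rw [← inf_assoc, hWσ' k hk, hind _ hsub, hWer k hk]
      linarith [hs.subadd h0 ((U.erase k).inf w) ((U.erase k).inf z)]
    have h2 := hs.indep_mono le_rfl (hxS _ hsub) h1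
    have h3 := hs.cond (U.inf w) (c := σ ⊓ (U.erase k).inf x) (d := σ ⊓ U.inf x)
      (inf_le_inf_left _ (Finset.inf_mono hsub))
    have e1 : U.inf w ⊓ (σ ⊓ U.inf x) = U.inf x ⊓ U.inf w := by
      rw [← inf_assoc, inf_eq_left.2 hWσ, inf_comm]
    have e2 : U.inf w ⊓ (σ ⊓ (U.erase k).inf x) = (U.erase k).inf x ⊓ U.inf w := by
      rw [← inf_assoc, inf_eq_left.2 hWσ, inf_comm]
    rw [e1, e2, hXW, hcorr] at h3
    linarith
  -- `H(Z_k | Z_{-k}) ≤ (H(X_k | X_{-k}) - ℓ) + H(Z_k | Z_{-k}, X_U, W_U)`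
  have hterm : ∀ k ∈ U, h (U.inf z) - h ((U.erase k).inf z)
      ≤ (h (U.inf x ⊓ ⊤) - h ((U.erase k).inf x ⊓ ⊤)) - l
        + (h (U.inf z ⊓ (U.inf x ⊓ U.inf w)) - h ((U.erase k).inf z ⊓ (U.inf x ⊓ U.inf w))) :=
    fun k hk => by
    have hsub := Finset.erase_subset k U
    have i1 := hind U subset_rfl
    have i2 := hind _ hsub
    have hle : U.inf w ⊓ (U.erase k).inf z ≤ (U.erase k).inf x :=
      (inf_le_inf_right _ (Finset.inf_mono hsub)).trans (hxS _ hsub)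
    have e1 : U.inf z ⊓ (U.inf x ⊓ U.inf w) = U.inf w ⊓ U.inf z := by
      rw [inf_left_comm, inf_comm (U.inf z), inf_eq_right.2 (hxS U subset_rfl)]
    have e2 : (U.erase k).inf z ⊓ (U.inf x ⊓ U.inf w)
        = x k ⊓ (U.inf w ⊓ (U.erase k).inf z) := by
      rw [← inf_erase_inf x hk]
      calc (U.erase k).inf z ⊓ (x k ⊓ (U.erase k).inf x ⊓ U.inf w)
          = x k ⊓ ((U.erase k).inf x ⊓ (U.inf w ⊓ (U.erase k).inf z)) := by ac_rfl
        _ = _ := by rw [inf_eq_right.2 hle]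
    have h1 := hs.cond (x k) (c := (U.erase k).inf x ⊓ U.inf w)
      (d := U.inf w ⊓ (U.erase k).inf z) (le_inf hle inf_le_left)
    rw [← inf_assoc (x k) ((U.erase k).inf x), inf_erase_inf x hk, hXW] at h1
    rw [e1, e2, inf_top_eq, inf_top_eq]
    linarith [hXerW k hk]
  have hsum := Finset.sum_le_sum hterm
  have hconst : ∀ c : ι → ℝ, ∑ k ∈ U, (c k - l) = ∑ k ∈ U, c k - (U.card : ℝ) * l := fun c => by
    rw [Finset.sum_sub_distrib, Finset.sum_const, nsmul_eq_mul]
  rw [Finset.sum_add_distrib, hconst] at hsum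
  have a1 := hs.han x ⊤ U
  have a2 := hs.han z (U.inf x ⊓ U.inf w) U
  have e1 : U.inf z ⊓ (U.inf x ⊓ U.inf w) = U.inf w ⊓ U.inf z := by
    rw [inf_left_comm, inf_comm (U.inf z), inf_eq_right.2 (hxS U subset_rfl)]
  rw [h0, inf_top_eq] at a1
  rw [hXW] at a2
  have a3 : h (U.inf z ⊓ (U.inf x ⊓ U.inf w)) = h (U.inf w) + h (U.inf z) := by
    rw [e1, hind U subset_rfl]
  simp only [inf_top_eq] at a1 hsum
  linarith

end Submodular

/-- With `h_n` the average of `g(S) / n` over `|S| = n`, the hypothesis says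
`h_{n-1} - h_n ≥ l / n`; summing from `2` to `|U|` gives the conclusion. -/
lemma sum_singleton_ge {ι : Type*} [DecidableEq ι] (g : Finset ι → ℝ) (l : ℝ)
    (hg : ∀ U : Finset ι, U.Nonempty →
      ∑ k ∈ U, (g U - g (U.erase k)) + ((U.card : ℝ) - 1) * l ≤ g U) (n : ℕ) :
    ∀ U : Finset ι, U.card = n + 1 →
      g U + ((n : ℝ) + 1) * (∑ i ∈ Finset.range n, 1 / ((i : ℝ) + 2)) * l
        ≤ ∑ k ∈ U, g {k} := by
  induction n with
  | zero =>
    intro U hU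
    obtain ⟨a, rfl⟩ := Finset.card_eq_one.1 hU
    simp
  | succ n ih =>
    intro U hU
    have h1 := hg U (Finset.card_pos.1 (by omega))
    have h2 := Finset.sum_le_sum fun k (hk : k ∈ U) =>
      ih (U.erase k) (by rw [Finset.card_erase_of_mem hk]; omega)
    have h3 : ∑ k ∈ U, ∑ j ∈ U.erase k, g {j} = ((n : ℝ) + 1) * ∑ j ∈ U, g {j} := by
      have : ∀ k ∈ U, ∑ j ∈ U.erase k, g {j} = ∑ j ∈ U, g {j} - g {k} := fun k hk => by
        rw [← Finset.add_sum_erase U (fun j => g {j}) hk]; ring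
      rw [Finset.sum_congr rfl this, Finset.sum_sub_distrib, Finset.sum_const, hU, nsmul_eq_mul]
      push_cast; ring
    rw [h3, Finset.sum_add_distrib, Finset.sum_const, nsmul_eq_mul, hU] at h2
    rw [Finset.sum_sub_distrib, Finset.sum_const, nsmul_eq_mul, hU] at h1
    rw [Finset.sum_range_succ]
    push_cast at h1 h2 ⊢
    set T := ∑ i ∈ Finset.range n, 1 / ((i : ℝ) + 2)
    have hn : (0 : ℝ) < (n : ℝ) + 1 := by positivity
    refine le_of_mul_le_mul_left ?_ hn
    have e : ((n : ℝ) + 1) * (g U + ((n : ℝ) + 1 + 1) * (T + 1 / ((n : ℝ) + 2)) * l)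
        = ((n : ℝ) + 1) * g U + ((n : ℝ) + 1) * ((n : ℝ) + 2) * T * l + ((n : ℝ) + 1) * l := by
      field_simp
      ring
    rw [e]
    linarith

/-! ### Entropy of a partition -/

section Entropy

variable {Ω : Type*}

lemma ker_prod {S T : Type*} (X : Ω → S) (Y : Ω → T) :
    Setoid.ker (fun ω => (X ω, Y ω)) = Setoid.ker X ⊓ Setoid.ker Y := by
  ext u v; simp [Setoid.inf_iff_and, Setoid.ker_def]

lemma finset_inf_setoid_iff {ι : Type*} (s : ι → Setoid Ω) (U : Finset ι) (u v : Ω) :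
    (U.inf s) u v ↔ ∀ k ∈ U, s k u v := by
  classical
  induction U using Finset.induction_on with
  | empty => exact ⟨fun _ _ h => absurd h (Finset.notMem_empty _), fun _ => trivial⟩
  | insert j U hj ih =>
    rw [Finset.inf_insert, Setoid.inf_iff_and, ih, Finset.forall_mem_insert]

lemma ker_pi_coe {ι : Type*} {S : ι → Type*} (X : ∀ k, Ω → S k) (U : Finset ι) :
    Setoid.ker (fun ω (k : ↥U) => X k.1 ω) = U.inf fun k => Setoid.ker (X k) := by
  ext u v
  rw [finset_inf_setoid_iff]
  simp [Setoid.ker_def, funext_iff]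

lemma ker_pi {ι : Type*} [Fintype ι] {S : ι → Type*} (X : ∀ k, Ω → S k) :
    Setoid.ker (fun ω k => X k ω) = Finset.univ.inf fun k => Setoid.ker (X k) := by
  ext u v
  rw [finset_inf_setoid_iff]
  simp [Setoid.ker_def, funext_iff]

variable [Fintype Ω]

open Classical in
/-- The probability of the block of the partition `s` that contains `ω`. -/
noncomputable def blockProb (μ : Ω → ℝ) (s : Setoid Ω) (ω : Ω) : ℝ :=
  ∑ ω' ∈ Finset.univ.filter (fun ω' => s ω' ω), μ ω'

/-- The entropy (in bits) of a partition of `Ω`, written as the expectation over sample points of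
`-log₂` of the probability of the block. -/
noncomputable def partEnt (μ : Ω → ℝ) (s : Setoid Ω) : ℝ :=
  - ∑ ω, μ ω * Real.logb 2 (blockProb μ s ω)

lemma probOf_eq_blockProb {S : Type*} (μ : Ω → ℝ) (X : Ω → S) (ω : Ω) :
    probOf μ X (X ω) = blockProb μ (Setoid.ker X) ω := rfl

lemma Hent_eq_partEnt {S : Type*} [Fintype S] (μ : Ω → ℝ) (X : Ω → S) :
    Hent μ X = partEnt μ (Setoid.ker X) := by
  classical
  unfold Hent partEnt
  congr 1
  rw [← Finset.sum_fiberwise (s := Finset.univ) (g := X)]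
  refine Finset.sum_congr rfl fun s _ => ?_
  conv_lhs => enter [1]; unfold probOf
  rw [Finset.sum_mul]
  refine Finset.sum_congr (by ext; simp) fun ω hω => ?_
  rw [← probOf_eq_blockProb, (Finset.mem_filter.1 hω).2]

lemma le_blockProb {μ : Ω → ℝ} (hμ0 : ∀ ω, 0 ≤ μ ω) (s : Setoid Ω) (ω : Ω) :
    μ ω ≤ blockProb μ s ω := by
  classical
  exact Finset.single_le_sum (fun i _ => hμ0 i) (by simp)

lemma blockProb_congr (μ : Ω → ℝ) (s : Setoid Ω) {ω ω' : Ω} (h : s ω ω') :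
    blockProb μ s ω = blockProb μ s ω' := by
  classical
  unfold blockProb
  congr 1
  ext v
  simpa using ⟨fun k => s.trans' k h, fun k => s.trans' k (s.symm' h)⟩

lemma partEnt_top {μ : Ω → ℝ} (hμ1 : ∑ ω, μ ω = 1) : partEnt μ ⊤ = 0 := by
  have : ∀ ω, blockProb μ ⊤ ω = 1 := fun ω => by
    rw [← hμ1]; unfold blockProb; congr 1; ext v; simp [Setoid.top_def]
  simp [partEnt, this]

/-- Conditioned on the block of `s` containing it, a set inside a single block of `s` has mass at
most one. -/
lemma sum_div_blockProb_le {μ : Ω → ℝ} (hμ0 : ∀ ω, 0 ≤ μ ω) (s : Setoid Ω) (A : Finset Ω)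
    (hA : ∀ ω ∈ A, ∀ ω' ∈ A, s ω ω') : ∑ ω ∈ A, μ ω / blockProb μ s ω ≤ 1 := by
  classical
  rcases A.eq_empty_or_nonempty with rfl | ⟨v, hv⟩
  · simp
  have : ∑ ω ∈ A, μ ω / blockProb μ s ω = (∑ ω ∈ A, μ ω) / blockProb μ s v := by
    rw [Finset.sum_div]
    exact Finset.sum_congr rfl fun ω hω => by rw [blockProb_congr μ s (hA ω hω v hv)]
  rw [this]
  refine div_le_one_of_le₀ ?_ ((hμ0 v).trans (le_blockProb hμ0 s v))
  exact Finset.sum_le_sum_of_subset_of_nonneg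
    (fun ω hω => by simpa using hA ω hω v hv) fun i _ _ => hμ0 i

open Classical in
/-- The function `p(a,c) p(b,c) / (p(a,b,c) p(c))` has expectation at most one. -/
lemma sum_ratio_le {μ : Ω → ℝ} (hμ0 : ∀ ω, 0 ≤ μ ω) (hμ1 : ∑ ω, μ ω = 1) (a b c : Setoid Ω) :
    ∑ ω, μ ω * (blockProb μ (a ⊓ c) ω * blockProb μ (b ⊓ c) ω
      / (blockProb μ (a ⊓ b ⊓ c) ω * blockProb μ c ω)) ≤ 1 := by
  have hp : ∀ s ω, 0 ≤ blockProb μ s ω := fun s ω => (hμ0 ω).trans (le_blockProb hμ0 s ω)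
  have key : ∀ ω, μ ω * (blockProb μ (a ⊓ c) ω * blockProb μ (b ⊓ c) ω
      / (blockProb μ (a ⊓ b ⊓ c) ω * blockProb μ c ω))
      = ∑ u, ∑ v, if (a ⊓ c) u ω ∧ (b ⊓ c) v ω then
          μ u * μ v / blockProb μ c u * (μ ω / blockProb μ (a ⊓ b ⊓ c) ω) else 0 := fun ω => by
    have e : blockProb μ (a ⊓ c) ω * blockProb μ (b ⊓ c) ω
        = ∑ u, ∑ v, if (a ⊓ c) u ω ∧ (b ⊓ c) v ω then μ u * μ v else 0 := by
      unfold blockProb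
      rw [Finset.sum_filter, Finset.sum_filter, Finset.sum_mul_sum]
      refine Finset.sum_congr rfl fun u _ => Finset.sum_congr rfl fun v _ => ?_
      split_ifs <;> simp_all
    rw [e, Finset.sum_div, Finset.mul_sum]
    refine Finset.sum_congr rfl fun u _ => ?_
    rw [Finset.sum_div, Finset.mul_sum]
    refine Finset.sum_congr rfl fun v _ => ?_
    split_ifs with huv
    · rw [blockProb_congr μ c (show c u ω from huv.1.2)]
      rw [div_mul_div_comm, mul_div_assoc', mul_comm (blockProb μ c ω)]
      ring
    · simp
  rw [Finset.sum_congr rfl fun ω _ => key ω, Finset.sum_comm]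
  calc _ ≤ ∑ u, ∑ v, if c v u then μ u * μ v / blockProb μ c u else 0 := by
        refine Finset.sum_le_sum fun u _ => ?_
        rw [Finset.sum_comm]
        refine Finset.sum_le_sum fun v _ => ?_
        rw [← Finset.sum_filter, ← Finset.mul_sum]
        have hnn : 0 ≤ μ u * μ v / blockProb μ c u :=
          div_nonneg (mul_nonneg (hμ0 u) (hμ0 v)) (hp c u)
        split_ifs with hc
        · refine mul_le_of_le_one_right hnn (sum_div_blockProb_le hμ0 _ _ ?_)
          intro ω hω ω' hω'
          obtain ⟨⟨h1, h2⟩, h3, -⟩ := (Finset.mem_filter.1 hω).2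
          obtain ⟨⟨h1', h2'⟩, h3', -⟩ := (Finset.mem_filter.1 hω').2
          exact ⟨⟨a.trans' (a.symm' h1) h1', b.trans' (b.symm' h3) h3'⟩,
            c.trans' (c.symm' h2) h2'⟩
        · rw [Finset.filter_eq_empty_iff.2, Finset.sum_empty, mul_zero]
          rintro ω - ⟨⟨-, h2⟩, -, h4⟩
          exact hc (c.trans' h4 (c.symm' h2))
    _ ≤ ∑ u, μ u := by
        refine Finset.sum_le_sum fun u _ => ?_
        rw [← Finset.sum_filter, ← Finset.sum_div, ← Finset.mul_sum]
        exact div_le_of_le_mul₀ (hp c u) (hμ0 u) le_rfl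
    _ = 1 := hμ1

lemma logb_le_div {x : ℝ} (hx : 0 < x) : Real.logb 2 x ≤ (x - 1) / Real.log 2 :=
  div_le_div_of_nonneg_right (Real.log_le_sub_one_of_pos hx) (Real.log_pos one_lt_two).le

lemma partEnt_submodular {μ : Ω → ℝ} (hμ0 : ∀ ω, 0 ≤ μ ω) (hμ1 : ∑ ω, μ ω = 1) :
    Submod (partEnt μ) := by
  intro a b c
  have key : ∀ ω, μ ω * (Real.logb 2 (blockProb μ (a ⊓ c) ω)
      + Real.logb 2 (blockProb μ (b ⊓ c) ω) - Real.logb 2 (blockProb μ (a ⊓ b ⊓ c) ω)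
      - Real.logb 2 (blockProb μ c ω))
      ≤ (μ ω * (blockProb μ (a ⊓ c) ω * blockProb μ (b ⊓ c) ω
      / (blockProb μ (a ⊓ b ⊓ c) ω * blockProb μ c ω)) - μ ω) / Real.log 2 := fun ω => by
    rcases (hμ0 ω).eq_or_lt with h | h
    · simp [← h]
    have hp : ∀ s, 0 < blockProb μ s ω := fun s => h.trans_le (le_blockProb hμ0 s ω)
    have h1 := hp (a ⊓ c)
    have h2 := hp (b ⊓ c)
    have h3 := hp (a ⊓ b ⊓ c)
    have h4 := hp c
    have := logb_le_div (div_pos (mul_pos h1 h2) (mul_pos h3 h4))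
    rw [Real.logb_div (mul_pos h1 h2).ne' (mul_pos h3 h4).ne', Real.logb_mul h1.ne' h2.ne',
      Real.logb_mul h3.ne' h4.ne'] at this
    have := mul_le_mul_of_nonneg_left this h.le
    calc _ = _ := by ring
      _ ≤ _ := this
      _ = _ := by ring
  have hsum := Finset.sum_le_sum fun ω (_ : ω ∈ Finset.univ) => key ω
  rw [← Finset.sum_div, Finset.sum_sub_distrib, hμ1] at hsum
  have h0 := div_nonpos_of_nonpos_of_nonneg (sub_nonpos.2 (sum_ratio_le hμ0 hμ1 a b c))
    (Real.log_pos one_lt_two).le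
  simp only [mul_sub, mul_add, Finset.sum_sub_distrib, Finset.sum_add_distrib] at hsum
  unfold partEnt
  linarith

lemma sum_probOf {S : Type*} [Fintype S] (μ : Ω → ℝ) (X : Ω → S) :
    ∑ s, probOf μ X s = ∑ ω, μ ω := by
  classical
  rw [← Finset.sum_fiberwise (s := Finset.univ) (g := X)]
  exact Finset.sum_congr rfl fun s _ => Finset.sum_congr (by ext; simp) fun _ _ => rfl

lemma Hent_le_logb_card {S : Type*} [Fintype S] {μ : Ω → ℝ} (hμ0 : ∀ ω, 0 ≤ μ ω)
    (hμ1 : ∑ ω, μ ω = 1) (X : Ω → S) : Hent μ X ≤ Real.logb 2 (Fintype.card S) := by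
  have hne : Nonempty Ω := by
    by_contra h
    rw [not_nonempty_iff] at h
    simp at hμ1
  have hS : Nonempty S := hne.map X
  have hN : (0 : ℝ) < Fintype.card S := by exact_mod_cast Fintype.card_pos
  have key : ∀ s, probOf μ X s * (- Real.logb 2 (probOf μ X s) - Real.logb 2 (Fintype.card S))
      ≤ ((Fintype.card S : ℝ)⁻¹ - probOf μ X s) / Real.log 2 := fun s => by
    have hp : 0 ≤ probOf μ X s := Finset.sum_nonneg fun i _ => hμ0 i
    rcases hp.eq_or_lt with h | h
    · rw [← h]
      have := Real.log_pos one_lt_two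
      simp only [zero_mul, sub_zero]
      positivity
    have := mul_le_mul_of_nonneg_left (logb_le_div (inv_pos.2 (mul_pos h hN))) hp
    rw [Real.logb_inv, Real.logb_mul h.ne' hN.ne'] at this
    calc _ = _ := by ring
      _ ≤ _ := this
      _ = _ := by field_simp
  have hsum := Finset.sum_le_sum fun s (_ : s ∈ Finset.univ) => key s
  rw [← Finset.sum_div, Finset.sum_sub_distrib, sum_probOf, hμ1, Finset.sum_const,
    Finset.card_univ, nsmul_eq_mul, mul_inv_cancel₀ hN.ne', sub_self, zero_div] at hsum
  simp only [mul_sub, Finset.sum_sub_distrib, ← Finset.sum_mul, sum_probOf, hμ1, one_mul,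
    mul_neg, Finset.sum_neg_distrib] at hsum
  unfold Hent
  linarith

/-- Independence of two variables, as additivity of the entropies of their partitions. -/
lemma partEnt_inf_of_indep {S T : Type*} {μ : Ω → ℝ} (hμ0 : ∀ ω, 0 ≤ μ ω)
    (X : Ω → S) (Y : Ω → T)
    (hXY : ∀ s t, probOf μ (fun ω => (X ω, Y ω)) (s, t) = probOf μ X s * probOf μ Y t) :
    partEnt μ (Setoid.ker X ⊓ Setoid.ker Y)
      = partEnt μ (Setoid.ker X) + partEnt μ (Setoid.ker Y) := by
  unfold partEnt
  rw [← neg_add, ← Finset.sum_add_distrib]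
  congr 1
  refine Finset.sum_congr rfl fun ω _ => ?_
  rcases (hμ0 ω).eq_or_lt with h | h
  · simp [← h]
  have hp : ∀ s, blockProb μ s ω ≠ 0 := fun s => (h.trans_le (le_blockProb hμ0 s ω)).ne'
  rw [← ker_prod, ← probOf_eq_blockProb, hXY, probOf_eq_blockProb, probOf_eq_blockProb,
    Real.logb_mul (hp _) (hp _), mul_add]

end Entropy

/-! ### The converse bound -/

/-- Converse part of Theorem 2: in K-user secure summation with user selection (K ≥ 2),
(1/K)·Σ_k H(Z_k) ≥ (1 + 1/2 + ⋯ + 1/(K−1))·L·log₂ q; in particular, if every key has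
entropy at most L_Z·log₂ q (e.g. it takes values in F_q^{L_Z}), then the key rate
satisfies R_Z = L_Z/L ≥ 1 + 1/2 + ⋯ + 1/(K−1). -/
theorem secure_summation_converse
    (K L q : ℕ) (hK : 2 ≤ K) (hL : 1 ≤ L) (hq : IsPrimePow q)
    (F : Type) [Field F] [Fintype F] (hF : Fintype.card F = q)
    (Ω : Type) [Fintype Ω] (μ : Ω → ℝ)
    (hμ0 : ∀ ω, 0 ≤ μ ω) (hμ1 : (∑ ω, μ ω) = 1)
    (SZ : Fin K → Type) [∀ k, Fintype (SZ k)]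
    (M : Finset (Fin K) → Fin K → Type) [∀ U k, Fintype (M U k)]
    (W : Fin K → Ω → (Fin L → F)) (Z : ∀ k : Fin K, Ω → SZ k)
    (X : ∀ (U : Finset (Fin K)) (k : Fin K), Ω → M U k)
    -- the inputs W_1, …, W_K are i.i.d. uniform over F_q^L
    (hWunif : ∀ w : Fin K → Fin L → F,
      probOf μ (fun ω (k : Fin K) => W k ω) w = ((q : ℝ) ^ (L * K))⁻¹)
    -- (W_1,…,W_K) is independent of (Z_1,…,Z_K)
    (hWZind : ∀ (w : Fin K → Fin L → F) (z : ∀ k : Fin K, SZ k),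
      probOf μ (fun ω => ((fun k : Fin K => W k ω), (fun k : Fin K => Z k ω))) (w, z)
        = probOf μ (fun ω (k : Fin K) => W k ω) w
            * probOf μ (fun ω (k : Fin K) => Z k ω) z)
    -- each message X_k^U is a deterministic function of (W_k, Z_k)
    (hXdet : ∀ (U : Finset (Fin K)) (k : Fin K), k ∈ U →
      ∃ f : (Fin L → F) → SZ k → M U k, ∀ ω, X U k ω = f (W k ω) (Z k ω))
    -- correctness: H(Σ_{k∈U} W_k | (X_k^U)_{k∈U}) = 0
    (hcorr : ∀ U : Finset (Fin K),
      Hcond μ (fun ω => ∑ k ∈ U, W k ω) (fun ω (k : ↥U) => X U k.1 ω) = 0)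
    -- security: I((W_k)_{k∈U}; (X_k^U)_{k∈U} | Σ_{k∈U} W_k) = 0
    (hsec : ∀ U : Finset (Fin K),
      CMI μ (fun ω (k : ↥U) => W k.1 ω) (fun ω (k : ↥U) => X U k.1 ω)
        (fun ω => ∑ k ∈ U, W k ω) = 0) :
    (1 / (K : ℝ)) * (∑ k : Fin K, Hent μ (Z k))
        ≥ (∑ i ∈ Finset.range (K - 1), 1 / ((i : ℝ) + 1)) * ((L : ℝ) * Real.logb 2 q) ∧
    ∀ LZ : ℝ, (∀ k : Fin K, Hent μ (Z k) ≤ LZ * Real.logb 2 q) →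
      LZ / L ≥ ∑ i ∈ Finset.range (K - 1), 1 / ((i : ℝ) + 1) := by
  classical
  set l : ℝ := (L : ℝ) * Real.logb 2 q with hl
  have hq1 : (1 : ℝ) < q := by exact_mod_cast hq.one_lt
  have hq0 : (0 : ℝ) < q := by linarith
  have hlog : 0 < Real.logb 2 q := Real.logb_pos one_lt_two hq1
  have hL0 : (0 : ℝ) < L := by exact_mod_cast hL
  have hK0 : (0 : ℝ) < K := by exact_mod_cast (by omega : 0 < K)
  have hs := partEnt_submodular hμ0 hμ1
  have h0 := partEnt_top hμ1
  set w : Fin K → Setoid Ω := fun k => Setoid.ker (W k) with hw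
  set z : Fin K → Setoid Ω := fun k => Setoid.ker (Z k) with hz
  have hle : ∀ V : Ω → (Fin L → F), partEnt μ (Setoid.ker V) ≤ l := fun V => by
    have := Hent_le_logb_card hμ0 hμ1 V
    rw [Hent_eq_partEnt] at this
    simpa [hF, Real.logb_pow, hl] using this
  have hWall : partEnt μ (Finset.univ.inf w) = K * l := by
    rw [hw, ← ker_pi, ← Hent_eq_partEnt, Hent]
    have hcard : (Fintype.card (Fin K → Fin L → F) : ℝ) = (q : ℝ) ^ (L * K) := by
      simp [hF, pow_mul]
    simp only [hWunif, Finset.sum_const, Finset.card_univ, nsmul_eq_mul, hcard]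
    rw [Real.logb_inv, Real.logb_pow, mul_inv_cancel_left₀ (by positivity), hl]
    push_cast
    ring
  have hWle : ∀ S : Finset (Fin K), partEnt μ (S.inf w) ≤ S.card * l := fun S => by
    induction S using Finset.induction_on with
    | empty => simp [h0]
    | insert j S hj ih =>
      rw [Finset.inf_insert, Finset.card_insert_of_notMem hj]
      have := hs.subadd h0 (w j) (S.inf w)
      have := hle (W j)
      push_cast
      linarith
  -- the complement of `S` accounts for at most `(K - |S|) l` of the full entropy `K l`
  have hWS : ∀ S : Finset (Fin K), partEnt μ (S.inf w) = S.card * l := fun S => by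
    refine le_antisymm (hWle S) ?_
    have h1 := hs.subadd h0 (S.inf w) (Sᶜ.inf w)
    rw [← Finset.inf_union, Finset.union_compl, hWall] at h1
    have h2 := hWle Sᶜ
    have h3 : (S.card : ℝ) + (Sᶜ.card : ℝ) = K := by
      exact_mod_cast (Finset.card_add_card_compl S).trans (Fintype.card_fin K)
    rw [← h3] at h1
    linarith
  have hindall : partEnt μ (Finset.univ.inf w ⊓ Finset.univ.inf z)
      = partEnt μ (Finset.univ.inf w) + partEnt μ (Finset.univ.inf z) := by
    rw [hw, hz, ← ker_pi, ← ker_pi]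
    exact partEnt_inf_of_indep hμ0 _ _ hWZind
  have hind : ∀ S T : Finset (Fin K), partEnt μ (S.inf w ⊓ T.inf z)
      = partEnt μ (S.inf w) + partEnt μ (T.inf z) := fun S T =>
    le_antisymm (hs.subadd h0 _ _) (hs.indep_mono (Finset.inf_mono (Finset.subset_univ _))
      (Finset.inf_mono (Finset.subset_univ _)) hindall.ge)
  have hD : ∀ U : Finset (Fin K), U.Nonempty →
      ∑ k ∈ U, (partEnt μ (U.inf z) - partEnt μ ((U.erase k).inf z)) + ((U.card : ℝ) - 1) * l
        ≤ partEnt μ (U.inf z) := fun U hU => by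
    have hc := hcorr U
    have hS := hsec U
    simp only [Hcond, CMI, Hent_eq_partEnt, ker_prod, ker_pi_coe W U, ker_pi_coe (X U) U]
      at hc hS
    refine dual_total_correlation_ge hs h0 w z (fun k => Setoid.ker (X U k))
      (Setoid.ker fun ω => ∑ k ∈ U, W k ω) U hU l ?_ ?_ ?_ (hle _) (fun S _ => hWS S)
      (fun S _ => hind U S) (by linarith) hS
    · rintro k hk u v ⟨h1, h2⟩
      obtain ⟨f, hf⟩ := hXdet U k hk
      change X U k u = X U k v
      rw [hf, hf, show W k u = W k v from h1, show Z k u = Z k v from h2]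
    · intro u v h
      rw [finset_inf_setoid_iff] at h
      exact Finset.sum_congr rfl h
    · rintro k hk u v ⟨h1, h2⟩
      replace h2 := (finset_inf_setoid_iff _ _ _ _).1 h2
      replace h1 : ∑ k ∈ U, W k u = ∑ k ∈ U, W k v := h1
      rw [← Finset.add_sum_erase _ _ hk, ← Finset.add_sum_erase _ _ hk,
        Finset.sum_congr rfl h2] at h1
      exact add_right_cancel h1
  obtain ⟨n, rfl⟩ : ∃ n, K = n + 1 := ⟨K - 1, by omega⟩
  have hfin := sum_singleton_ge (fun S => partEnt μ (S.inf z)) l hD n Finset.univ (by simp)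
  have hfull : (n : ℝ) * l ≤ partEnt μ (Finset.univ.inf z) := by
    have h1 := hD Finset.univ Finset.univ_nonempty
    have h2 : 0 ≤ ∑ k : Fin (n + 1), (partEnt μ (Finset.univ.inf z)
        - partEnt μ ((Finset.univ.erase k).inf z)) :=
      Finset.sum_nonneg fun k _ =>
        sub_nonneg.2 (hs.anti (Finset.inf_mono (Finset.subset_univ _)))
    simp only [Finset.card_univ, Fintype.card_fin] at h1
    push_cast at h1
    linarith
  have hharm : ∑ i ∈ Finset.range n, 1 / ((i : ℝ) + 1)
      = 1 + ∑ i ∈ Finset.range n, 1 / ((i : ℝ) + 2) - 1 / ((n : ℝ) + 1) := by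
    have h1 := Finset.sum_range_succ (fun i : ℕ => 1 / ((i : ℝ) + 1)) n
    rw [Finset.sum_range_succ'] at h1
    have h2 : ∀ i : ℕ, 1 / (((i + 1 : ℕ) : ℝ) + 1) = 1 / ((i : ℝ) + 2) := fun i => by
      push_cast; ring
    simp only [h2] at h1
    norm_num at h1 ⊢
    linarith
  have hsumZ : ∑ k, Hent μ (Z k) = ∑ k, partEnt μ (({k} : Finset (Fin (n + 1))).inf z) :=
    Finset.sum_congr rfl fun k _ => by rw [Hent_eq_partEnt, Finset.inf_singleton]
  have hmain : ((n + 1 : ℕ) : ℝ) * ((∑ i ∈ Finset.range n, 1 / ((i : ℝ) + 1)) * l)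
      ≤ ∑ k, Hent μ (Z k) := by
    rw [hsumZ, hharm]
    refine le_trans (le_of_eq ?_) ((add_le_add_left hfull _).trans hfin)
    push_cast
    field_simp
    ring
  have hpart1 : (1 / ((n + 1 : ℕ) : ℝ)) * (∑ k, Hent μ (Z k))
      ≥ (∑ i ∈ Finset.range (n + 1 - 1), 1 / ((i : ℝ) + 1)) * l := by
    rw [ge_iff_le, one_div_mul_eq_div, le_div_iff₀ hK0, mul_comm, Nat.add_sub_cancel]
    exact hmain
  refine ⟨hpart1, fun LZ hLZ => ?_⟩
  have h1 : ∑ k, Hent μ (Z k) ≤ ((n + 1 : ℕ) : ℝ) * (LZ * Real.logb 2 q) := by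
    refine (Finset.sum_le_sum fun k _ => hLZ k).trans (le_of_eq ?_)
    simp
  have h2 := le_of_mul_le_mul_left (hmain.trans h1) hK0
  rw [hl, ← mul_assoc] at h2
  rw [ge_iff_le, le_div_iff₀ hL0, Nat.add_sub_cancel]
  exact le_of_mul_le_mul_right h2 hlog
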